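/- Let G be an interval graph with interval representation I and right-endpoint ordering σ, and let P=(P_1,u,w,P_2) be a normal path of G in which w is the immediate successor of u. If w <_σ u, then I_w ⊆ I_u. -/

import Mathlib

/-- `p` is a normal path of the interval graph `G` with right-endpoint function `r`:
it is a path (consecutive vertices adjacent, no repeated vertex), its first vertex is
the leftmost vertex of the path in the right-endpoint ordering, and each vertex `p[i+1]`
is the leftmost (in the right-endpoint ordering) vertex among the later path vertices
that are adjacent to `p[i]`. -/
def IsNormalPath {V : Type*} (G : SimpleGraph V) (r : V → ℝ) (p : List V) : Prop :=
  p.Chain' G.Adj ∧ p.Nodup ∧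
  (∀ (h : p ≠ []), ∀ v ∈ p, r (p.head h) ≤ r v) ∧
  (∀ i j : ℕ, ∀ (hi : i + 1 < p.length) (hj : j < p.length), i + 1 ≤ j →
    G.Adj (p[i]'(by omega)) (p[j]'hj) → r (p[i+1]'hi) ≤ r (p[j]'hj))

/-- `u` occurs strictly before `w` on the list `p`. -/
def Before {V : Type*} (p : List V) (u w : V) : Prop :=
  ∃ q1 q2 q3 : List V, p = q1 ++ u :: q2 ++ w :: q3

/-- An interval representation of `G`: `v` stands for the nonempty closed interval `[l v, r v]`, and
adjacency of distinct vertices is intersection of their intervals, expressed through endpoints.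
One-point intervals and shared endpoints are allowed. -/
structure IsIntervalRepresentation {V α : Type*} [LinearOrder α] (G : SimpleGraph V)
    (l r : V → α) : Prop where
  left_le_right : ∀ v, l v ≤ r v
  adj_iff : ∀ u v, G.Adj u v ↔ u ≠ v ∧ l u ≤ r v ∧ l v ≤ r u

namespace IsIntervalRepresentation

variable {V α : Type*} [LinearOrder α] {G : SimpleGraph V} {l r : V → α} {x y w : V}

theorem right_lt_left_of_not_adj (hI : IsIntervalRepresentation G l r) (hne : x ≠ w)
    (hxw : ¬G.Adj x w) (hle : l x ≤ r w) : r x < l w := by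
  by_contra! hwx
  exact hxw ((hI.adj_iff x w).2 ⟨hne, hle, hwx⟩)

theorem left_le_left_of_adj_of_not_adj (hI : IsIntervalRepresentation G l r) (hxy : G.Adj x y)
    (hne : x ≠ w) (hxw : ¬G.Adj x w) (hx : r x ≤ r w ∨ l x ≤ l w) : l y ≤ l w := by
  have hle : l x ≤ r w :=
    hx.elim (hI.left_le_right x).trans fun h => h.trans (hI.left_le_right w)
  calc
    l y ≤ r x := ((hI.adj_iff x y).1 hxy).2.2
    _ ≤ l w := (hI.right_lt_left_of_not_adj hne hxw hle).le

end IsIntervalRepresentation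

theorem Before.rel_of_pairwise {V : Type*} {R : V → V → Prop} {p : List V} {u w : V}
    (h : Before p u w) (hp : p.Pairwise R) : R u w := by
  obtain ⟨q₁, q₂, q₃, rfl⟩ := h
  exact (List.pairwise_append.1 hp).2.2 u (by simp) w (by simp)

/-
Fix a vertex `w` of the path and walk towards it from the first vertex, keeping the invariant that
the current vertex `x` satisfies `r x ≤ r w ∨ l x ≤ l w`. The first vertex does, being leftmost in
the right-endpoint ordering. If `x` is adjacent to `w`, then `w` competed for the place of the
successor of `x`, so the successor is at most `w` in that ordering. Otherwise `I_x` lies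
entirely to the left of `I_w`, and the successor, which meets `I_x`, starts before `I_w`.
-/
theorem IsNormalPath.pairwise_right_le_or_left_le {V : Type*} {G : SimpleGraph V} {l r : V → ℝ}
    {p : List V} (hp : IsNormalPath G r p) (hI : IsIntervalRepresentation G l r) :
    p.Pairwise fun x w => r x ≤ r w ∨ l x ≤ l w := by
  obtain ⟨hchain, hnodup, hhead, hnext⟩ := hp
  rw [List.pairwise_iff_getElem]
  intro i k hi hk hik
  induction i with
  | zero =>
    left
    have hne : p ≠ [] := List.ne_nil_of_length_pos hi
    simpa only [List.head_eq_getElem] using hhead hne p[k] (List.getElem_mem hk)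
  | succ i ih =>
    have hinvariant : r p[i] ≤ r p[k] ∨ l p[i] ≤ l p[k] := ih (by omega) (by omega)
    by_cases hadj : G.Adj p[i] p[k]
    · exact .inl (hnext i k hi hk hik.le hadj)
    · right
      have hsucc : G.Adj p[i] p[i + 1] := List.isChain_iff_getElem.1 hchain i hi
      have hne : p[i] ≠ p[k] := fun h => by
        have := hnodup.getElem_inj_iff.1 h
        omega
      exact hI.left_le_left_of_adj_of_not_adj hsucc hne hadj hinvariant

theorem stmt3_general {V : Type*} {G : SimpleGraph V} {l r : V → ℝ} {p : List V} {u w : V}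
    (hI : IsIntervalRepresentation G l r) (hnp : IsNormalPath G r p) (huw : Before p u w)
    (hsigma : r w < r u) :
    Set.Icc (l w) (r w) ⊆ Set.Icc (l u) (r u) := by
  have hle : r u ≤ r w ∨ l u ≤ l w := huw.rel_of_pairwise (hnp.pairwise_right_le_or_left_le hI)
  exact Set.Icc_subset_Icc (hle.resolve_left hsigma.not_ge) hsigma.le

theorem stmt3 {V : Type*} [Fintype V]
    (G : SimpleGraph V) (l r : V → ℝ)
    (hlr : ∀ v : V, l v < r v)
    (hinjl : Function.Injective l) (hinjr : Function.Injective r)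
    (hlrne : ∀ u v : V, l u ≠ r v)
    (hadj : ∀ u v : V, G.Adj u v ↔ u ≠ v ∧ l u ≤ r v ∧ l v ≤ r u)
    (p1 p2 : List V) (u w : V)
    (hnp : IsNormalPath G r (p1 ++ u :: w :: p2))
    (hsigma : r w < r u) :
    Set.Icc (l w) (r w) ⊆ Set.Icc (l u) (r u) :=
  stmt3_general ⟨fun v => (hlr v).le, hadj⟩ hnp ⟨p1, [], p2, by simp⟩ hsigma
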